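/- Let N ⊆ [n] with |N| > 72ℓ, where ℓ ≥ 1 and n ≥ 2. For each i ∈ [⌈log n⌉] and j ∈ [⌈d log n⌉], let V_{i,j} ⊆ [n] be a random subset including each element independently with probability 2^(−i), and set N_{i,j} = N ∩ V_{i,j}. Then there exists i such that, with probability at least 1 − n^(−dℓ), for at least one j we have 12ℓ < |N_{i,j}| < 72ℓ. -/

import Mathlib

open Finset

/-!
The proof is a Chernoff bound by counting. Writing `K = 2 ^ i`, the generating function
`∑ f, t ^ #{v ∈ N | f v = 0}` over all `f : [n] → Fin K` factors over the coordinates and is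
therefore at most `K ^ n * exp ((t - 1) * |N| / K)` (`sum_pow_card_zero_le`). Choose the level `i`
with `24ℓ ≤ |N| / 2 ^ i ≤ 48ℓ`. Markov's inequality with `t = 1/2` for the lower tail and
`t = 3/2` for the upper tail shows that a single sample misses the window `(12ℓ, 72ℓ)` with
probability at most `(1/4) ^ ℓ + (1/4) ^ ℓ ≤ 2 ^ (-ℓ)` (`card_bad_le`). By independence all `M`
samples miss it with probability at most `2 ^ (-ℓM) ≤ n ^ (-dℓ)`, as `M ≥ d log₂ n`.
-/

/-- Bound on the (unnormalised) probability generating function of the number of sampled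
elements of `N`. -/
lemma sum_pow_card_zero_le (n K : ℕ) [NeZero K] (N : Finset (Fin n)) (t : ℝ) (ht : 0 ≤ t) :
    ∑ f : Fin n → Fin K, t ^ (N.filter fun v => f v = 0).card
      ≤ (K : ℝ) ^ n * Real.exp ((t - 1) * N.card / K) := by
  have hK : (0 : ℝ) < K := by exact_mod_cast Nat.pos_of_ne_zero (NeZero.ne K)
  have h1 : ∀ f : Fin n → Fin K, t ^ (N.filter fun v => f v = 0).card
      = ∏ v, (if v ∈ N ∧ f v = 0 then t else 1) := by
    intro f
    rw [Finset.prod_ite, Finset.prod_const, Finset.prod_const_one, mul_one]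
    congr 2
    ext v
    simp
  have h2 : ∑ f : Fin n → Fin K, t ^ (N.filter fun v => f v = 0).card
      = ∏ v : Fin n, ∑ x : Fin K, (if v ∈ N ∧ x = 0 then t else 1) := by
    rw [Finset.prod_univ_sum, Fintype.piFinset_univ]
    exact Finset.sum_congr rfl fun f _ => h1 f
  have h3 : (K : ℝ) ^ n * Real.exp ((t - 1) * N.card / K)
      = ∏ v : Fin n, ((K : ℝ) * Real.exp (if v ∈ N then (t - 1) / K else 0)) := by
    rw [Finset.prod_mul_distrib, Finset.prod_const, ← Real.exp_sum, Finset.card_univ,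
      Fintype.card_fin, Finset.sum_ite_mem, Finset.univ_inter, Finset.sum_const, nsmul_eq_mul]
    congr 2
    ring
  rw [h2, h3]
  refine Finset.prod_le_prod (fun v _ => Finset.sum_nonneg fun x _ => ?_) (fun v _ => ?_)
  · split_ifs <;> linarith
  · by_cases hv : v ∈ N
    · have h4 : ∑ x : Fin K, (if v ∈ N ∧ x = 0 then t else 1) = K + (t - 1) := by
        have : ∀ x : Fin K, (if v ∈ N ∧ x = 0 then t else 1)
            = 1 + (if x = 0 then t - 1 else 0) := by
          intro x
          by_cases hx : x = 0 <;> simp [hv, hx]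
        rw [Finset.sum_congr rfl fun x _ => this x, Finset.sum_add_distrib]
        simp
      rw [h4, if_pos hv]
      calc (K : ℝ) + (t - 1) = K * ((t - 1) / K + 1) := by field_simp; ring
        _ ≤ _ := mul_le_mul_of_nonneg_left (Real.add_one_le_exp _) hK.le
    · simp [hv]

/-- If the expected sample size `|N| / K` lies in `[24ℓ, 48ℓ]`, a single sample misses the window
`(12ℓ, 72ℓ)` with probability at most `2 ^ (-ℓ)`. -/
lemma card_bad_le (n K ℓ : ℕ) [NeZero K] (hℓ : 1 ≤ ℓ) (N : Finset (Fin n))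
    (hlo : 24 * ℓ * K ≤ N.card) (hhi : N.card ≤ 48 * ℓ * K) :
    ((Finset.univ.filter fun f : Fin n → Fin K =>
        ¬ (12 * ℓ < (N.filter fun v => f v = 0).card ∧
            (N.filter fun v => f v = 0).card < 72 * ℓ)).card : ℝ)
      ≤ (K : ℝ) ^ n * (1 / 2) ^ ℓ := by
  have hK : (0 : ℝ) < K := by exact_mod_cast Nat.pos_of_ne_zero (NeZero.ne K)
  have hKn : (0 : ℝ) < (K : ℝ) ^ n := pow_pos hK n
  have hlo' : 24 * ℓ ≤ (N.card : ℝ) / K := by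
    rw [le_div_iff₀ hK]; exact_mod_cast hlo
  have hhi' : (N.card : ℝ) / K ≤ 48 * ℓ := by
    rw [div_le_iff₀ hK]; exact_mod_cast hhi
  set X : (Fin n → Fin K) → ℕ := fun f => (N.filter fun v => f v = 0).card with hX
  -- Markov's inequality for `t ^ X`, with a threshold `c ≤ t ^ X` on the event in question.
  have markov : ∀ (t c : ℝ), 0 ≤ t →
      ∀ P : (Fin n → Fin K) → Prop, ∀ [DecidablePred P], (∀ f, P f → c ≤ t ^ X f) →
      ((Finset.univ.filter P).card : ℝ) * c
        ≤ (K : ℝ) ^ n * Real.exp ((t - 1) * N.card / K) := by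
    intro t c ht P _ hP
    refine le_trans ?_ (sum_pow_card_zero_le n K N t ht)
    calc ((Finset.univ.filter P).card : ℝ) * c = ∑ f ∈ Finset.univ.filter P, c := by
          rw [Finset.sum_const, nsmul_eq_mul]
      _ ≤ ∑ f ∈ Finset.univ.filter P, t ^ X f :=
          Finset.sum_le_sum fun f hf => hP f (Finset.mem_filter.1 hf).2
      _ ≤ ∑ f, t ^ X f :=
          Finset.sum_le_sum_of_subset_of_nonneg (Finset.filter_subset _ _)
            fun f _ _ => pow_nonneg ht _
  have low : ((Finset.univ.filter fun f => X f ≤ 12 * ℓ).card : ℝ)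
      ≤ (K : ℝ) ^ n * (1 / 4) ^ ℓ := by
    have h := markov (1 / 2) ((1 / 2) ^ (12 * ℓ)) (by norm_num) (fun f => X f ≤ 12 * ℓ)
      (fun f hf => pow_le_pow_of_le_one (by norm_num) (by norm_num) hf)
    have hbase : Real.exp (-12) ≤ (1 / 2) ^ 12 * (1 / 4) := by
      have e1 : Real.exp (-12) = (Real.exp 1 ^ 12)⁻¹ := by
        rw [← Real.exp_nat_mul, ← Real.exp_neg]; norm_num
      have e2 : (2.7 : ℝ) ^ 12 ≤ Real.exp 1 ^ 12 :=
        pow_le_pow_left₀ (by norm_num) (by linarith [Real.exp_one_gt_d9]) _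
      rw [e1]
      refine inv_le_of_inv_le₀ (by norm_num) (le_trans ?_ e2)
      norm_num
    have he : Real.exp ((1 / 2 - 1) * N.card / K) ≤ (1 / 2) ^ (12 * ℓ) * (1 / 4) ^ ℓ := by
      calc Real.exp ((1 / 2 - 1) * N.card / K) ≤ Real.exp (ℓ * (-12)) := by
            apply Real.exp_le_exp.2
            rw [mul_div_assoc]; linarith
        _ = Real.exp (-12) ^ ℓ := Real.exp_nat_mul _ _
        _ ≤ ((1 / 2) ^ 12 * (1 / 4)) ^ ℓ := pow_le_pow_left₀ (Real.exp_pos _).le hbase _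
        _ = _ := by rw [mul_pow, pow_mul]
    have hc : (0 : ℝ) < (1 / 2) ^ (12 * ℓ) := by positivity
    refine le_of_mul_le_mul_right (h.trans ?_) hc
    calc _ ≤ (K : ℝ) ^ n * ((1 / 2) ^ (12 * ℓ) * (1 / 4) ^ ℓ) :=
          mul_le_mul_of_nonneg_left he hKn.le
      _ = _ := by ring
  have high : ((Finset.univ.filter fun f => 72 * ℓ ≤ X f).card : ℝ)
      ≤ (K : ℝ) ^ n * (1 / 4) ^ ℓ := by
    have h := markov (3 / 2) ((3 / 2) ^ (72 * ℓ)) (by norm_num) (fun f => 72 * ℓ ≤ X f)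
      (fun f hf => pow_le_pow_right₀ (by norm_num) hf)
    have hbase : Real.exp 24 ≤ (3 / 2) ^ 72 * (1 / 4) := by
      have e1 : Real.exp 24 = Real.exp 1 ^ 24 := by
        rw [← Real.exp_nat_mul]; norm_num
      have e2 : Real.exp 1 ^ 24 ≤ (2.72 : ℝ) ^ 24 :=
        pow_le_pow_left₀ (Real.exp_pos 1).le (by linarith [Real.exp_one_lt_d9]) _
      rw [e1]
      refine e2.trans ?_
      norm_num
    have he : Real.exp ((3 / 2 - 1) * N.card / K) ≤ (3 / 2) ^ (72 * ℓ) * (1 / 4) ^ ℓ := by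
      calc Real.exp ((3 / 2 - 1) * N.card / K) ≤ Real.exp (ℓ * 24) := by
            apply Real.exp_le_exp.2
            rw [mul_div_assoc]; linarith
        _ = Real.exp 24 ^ ℓ := Real.exp_nat_mul _ _
        _ ≤ ((3 / 2) ^ 72 * (1 / 4)) ^ ℓ := pow_le_pow_left₀ (Real.exp_pos _).le hbase _
        _ = _ := by rw [mul_pow, pow_mul]
    have hc : (0 : ℝ) < (3 / 2) ^ (72 * ℓ) := by positivity
    refine le_of_mul_le_mul_right (h.trans ?_) hc
    calc _ ≤ (K : ℝ) ^ n * ((3 / 2) ^ (72 * ℓ) * (1 / 4) ^ ℓ) :=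
          mul_le_mul_of_nonneg_left he hKn.le
      _ = _ := by ring
  have hunion : ((Finset.univ.filter fun f => ¬ (12 * ℓ < X f ∧ X f < 72 * ℓ)).card : ℝ)
      ≤ (Finset.univ.filter fun f => X f ≤ 12 * ℓ).card
        + (Finset.univ.filter fun f => 72 * ℓ ≤ X f).card := by
    norm_cast
    refine le_trans (Finset.card_le_card ?_) (Finset.card_union_le _ _)
    intro f
    simp only [Finset.mem_filter, Finset.mem_union, Finset.mem_univ, true_and]
    omega
  have hhalf : (1 / 4 : ℝ) ^ ℓ + (1 / 4) ^ ℓ ≤ (1 / 2) ^ ℓ := by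
    have a : (1 / 4 : ℝ) ^ ℓ = (1 / 2) ^ ℓ * (1 / 2) ^ ℓ := by
      rw [← mul_pow]; norm_num
    have b : (1 / 2 : ℝ) ^ ℓ ≤ 1 / 2 := by
      simpa using pow_le_pow_of_le_one (by norm_num : (0 : ℝ) ≤ 1 / 2) (by norm_num) hℓ
    have c : (0 : ℝ) < (1 / 2) ^ ℓ := by positivity
    rw [a]; nlinarith
  calc _ ≤ (K : ℝ) ^ n * (1 / 4) ^ ℓ + (K : ℝ) ^ n * (1 / 4) ^ ℓ := by linarith
    _ = (K : ℝ) ^ n * ((1 / 4) ^ ℓ + (1 / 4) ^ ℓ) := by ring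
    _ ≤ _ := mul_le_mul_of_nonneg_left hhalf hKn.le

/-- Independence of the `M` samples, in counting form: the families with at least one good member
are all families except those drawn entirely from the bad elements. -/
lemma card_exists_good {α : Type*} [Fintype α] (M : ℕ) (P : α → Prop)
    [DecidablePred P] :
    (Nat.card {ω : Fin M → α // ∃ j, P (ω j)} : ℝ)
      = (Fintype.card α : ℝ) ^ M - ((Finset.univ.filter fun a => ¬ P a).card : ℝ) ^ M := by
  classical
  have h1 : Nat.card {ω : Fin M → α // ∃ j, P (ω j)}
      = (Finset.univ.filter fun ω : Fin M → α => ∃ j, P (ω j)).card := by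
    rw [Nat.card_eq_fintype_card, Fintype.card_subtype]
  have h2 : (Finset.univ.filter fun ω : Fin M → α => ¬ ∃ j, P (ω j))
      = Fintype.piFinset fun _ : Fin M => Finset.univ.filter fun a => ¬ P a := by
    ext ω
    simp [Fintype.mem_piFinset]
  have h3 := Finset.card_filter_add_card_filter_not (s := (Finset.univ : Finset (Fin M → α)))
    (fun ω => ∃ j, P (ω j))
  rw [h2, Fintype.card_piFinset_const, Finset.card_univ, Fintype.card_fun, Fintype.card_fin,
    ← h1] at h3
  rw [eq_sub_iff_add_eq]
  exact_mod_cast h3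

theorem sampling_lemma (n ℓ d : ℕ) (hn : 2 ≤ n) (hℓ : 1 ≤ ℓ) (hd : 1 ≤ d)
    (N : Finset (Fin n)) (hN : 72 * ℓ < N.card)
    (M : ℕ) (hM : M = ⌈(d : ℝ) * Real.logb 2 n⌉₊) :
    ∃ i : ℕ, 1 ≤ i ∧ i ≤ ⌈Real.logb 2 n⌉₊ ∧
      (Nat.card {ω : Fin M → Fin n → Fin (2 ^ i) //
          ∃ j : Fin M, 12 * ℓ < (N.filter fun v => ω j v = 0).card ∧
            (N.filter fun v => ω j v = 0).card < 72 * ℓ} : ℝ) /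
          ((2 : ℝ) ^ i) ^ (n * M)
        ≥ 1 - (n : ℝ) ^ (-((d * ℓ : ℕ) : ℝ)) := by
  have hn0 : (0 : ℝ) < n := by exact_mod_cast (by omega : 0 < n)
  have hq : N.card / (24 * ℓ) ≠ 0 := by
    have : 0 < N.card / (24 * ℓ) := Nat.div_pos (by omega) (by omega)
    omega
  -- The largest `i` with `24ℓ * 2 ^ i ≤ |N|`.
  obtain ⟨i, hi⟩ : ∃ i, i = Nat.log 2 (N.card / (24 * ℓ)) := ⟨_, rfl⟩
  have hlo : 24 * ℓ * 2 ^ i ≤ N.card := by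
    have := Nat.pow_log_le_self 2 hq
    rw [← hi, Nat.le_div_iff_mul_le (by omega)] at this
    linarith
  have hhi : N.card ≤ 48 * ℓ * 2 ^ i := by
    have := Nat.lt_pow_succ_log_self (b := 2) (by norm_num) (N.card / (24 * ℓ))
    rw [← hi, Nat.div_lt_iff_lt_mul (by omega), pow_succ] at this
    nlinarith
  have hi1 : 1 ≤ i := by
    by_contra h
    have : i = 0 := by omega
    subst this
    omega
  have hin : i ≤ ⌈Real.logb 2 n⌉₊ := by
    have hNn : N.card ≤ n := by simpa using Finset.card_le_univ N
    have h2 : 2 ^ i ≤ n := by nlinarith [Nat.one_le_two_pow (n := i)]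
    have h3 : (i : ℝ) ≤ Real.logb 2 n := by
      rw [Real.le_logb_iff_rpow_le (by norm_num) hn0, Real.rpow_natCast]
      exact_mod_cast h2
    exact_mod_cast h3.trans (Nat.le_ceil _)
  refine ⟨i, hi1, hin, ?_⟩
  have hbad := card_bad_le n (2 ^ i) ℓ hℓ N hlo hhi
  have hcard := card_exists_good M (fun f : Fin n → Fin (2 ^ i) =>
    12 * ℓ < (N.filter fun v => f v = 0).card ∧ (N.filter fun v => f v = 0).card < 72 * ℓ)
  rw [hcard]
  have hT : (0 : ℝ) < ((2 : ℝ) ^ i) ^ (n * M) := by positivity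
  have hpow := pow_le_pow_left₀ (Nat.cast_nonneg _) hbad M
  rw [ge_iff_le, le_div_iff₀ hT]
  have hfail : ((1 / 2 : ℝ) ^ ℓ) ^ M ≤ (n : ℝ) ^ (-((d * ℓ : ℕ) : ℝ)) := by
    have hM' : (d : ℝ) * Real.logb 2 n ≤ M := hM ▸ Nat.le_ceil _
    have hn2 : (n : ℝ) = (2 : ℝ) ^ Real.logb 2 n :=
      (Real.rpow_logb (by norm_num) (by norm_num) hn0).symm
    have hl : ((1 / 2 : ℝ) ^ ℓ) ^ M = (2 : ℝ) ^ (-((ℓ * M : ℕ) : ℝ)) := by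
      rw [← pow_mul, Real.rpow_neg (by norm_num), Real.rpow_natCast, one_div, inv_pow]
    have hr : (n : ℝ) ^ (-((d * ℓ : ℕ) : ℝ))
        = (2 : ℝ) ^ (Real.logb 2 n * (-((d * ℓ : ℕ) : ℝ))) := by
      rw [Real.rpow_mul (by norm_num), ← hn2]
    rw [hl, hr]
    apply Real.rpow_le_rpow_of_exponent_le (by norm_num)
    push_cast
    nlinarith [mul_le_mul_of_nonneg_left hM' (Nat.cast_nonneg (α := ℝ) ℓ)]
  rw [mul_pow] at hpow
  have hcast : (((2 ^ i : ℕ) : ℝ) ^ n) ^ M = ((2 : ℝ) ^ i) ^ (n * M) := by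
    push_cast
    rw [← pow_mul _ n M]
  have hfull : (Fintype.card (Fin n → Fin (2 ^ i)) : ℝ) ^ M = ((2 : ℝ) ^ i) ^ (n * M) := by
    rw [← hcast]
    simp
  rw [hcast] at hpow
  rw [hfull]
  have := mul_le_mul_of_nonneg_left hfail hT.le
  linarith
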